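/- arXiv:1906.09541 — 2 statements merged into one kernel-verified Lean document; each statement's English description precedes it below -/
import Mathlib

section
/- Let a be a channel and let Ω_{½a} = μX.(½τ.a.0 ⊕ ½τ.X). Then the equivalence closure of the single pair {(Ω_{½a}, a.0)} is a codivergent branching bisimulation on P_RCCS; in particular Ω_{½a} =_RCCS a.0. -/
/-!
Formalization of RCCS (Randomized CCS) following the paper
"A Uniform Framework for Probabilistic Process Models".
Channels form a type `Chan`; terms use de Bruijn indices for process variables.
-/

noncomputable section
open scoped Classical

/-- RCCS terms over a set of channels, with de Bruijn process variables.
`sum n α T` is the nondeterministic choice `Σ_{i∈[n]} α_i.T_i` (guards are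
names `Sum.inl a` or conames `Sum.inr a`); `rand n p T` is the random choice
`⊕_{i∈[n]} p_i τ.T_i`; `par` is composition, `loc a T` is localization `(a)T`,
and `fix T` is the fixpoint `μX.T`. -/
inductive Tm (Chan : Type) : Type
  | var : ℕ → Tm Chan
  | sum : (n : ℕ) → (Fin n → Chan ⊕ Chan) → (Fin n → Tm Chan) → Tm Chan
  | rand : (n : ℕ) → (Fin n → ℝ) → (Fin n → Tm Chan) → Tm Chan
  | par : Tm Chan → Tm Chan → Tm Chan
  | loc : Chan → Tm Chan → Tm Chan
  | fix : Tm Chan → Tm Chan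

variable {Chan : Type}

/-- Labels: names, conames, and `tau p` for `p ∈ (0,1]`; `tau 1` is the plain
silent action `τ`, identified with `1τ`. -/
inductive Lab (Chan : Type) : Type
  | name : Chan → Lab Chan
  | coname : Chan → Lab Chan
  | tau : ℝ → Lab Chan

/-- The label of an external prefix. -/
def guardLab : Chan ⊕ Chan → Lab Chan
  | .inl a => .name a
  | .inr a => .coname a

/-- A label is an action in `Act` if it is a name, a coname, or `τ = 1τ`. -/
def Lab.IsAct : Lab Chan → Prop
  | .name _ => True
  | .coname _ => True
  | .tau p => p = 1

/-- Shift de Bruijn indices `≥ c` up by one. -/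
def Tm.lift : ℕ → Tm Chan → Tm Chan
  | c, .var n => .var (if n < c then n else n + 1)
  | c, .sum n α T => .sum n α fun i => Tm.lift c (T i)
  | c, .rand n p T => .rand n p fun i => Tm.lift c (T i)
  | c, .par S T => .par (Tm.lift c S) (Tm.lift c T)
  | c, .loc a T => .loc a (Tm.lift c T)
  | c, .fix T => .fix (Tm.lift (c + 1) T)

/-- Capture-avoiding substitution of the term `S` for variable `c`
(other variables above `c` are shifted down). -/
def Tm.inst : ℕ → Tm Chan → Tm Chan → Tm Chan
  | c, S, .var n => if n < c then .var n else if n = c then S else .var (n - 1)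
  | c, S, .sum n α T => .sum n α fun i => Tm.inst c S (T i)
  | c, S, .rand n p T => .rand n p fun i => Tm.inst c S (T i)
  | c, S, .par S' T => .par (Tm.inst c S S') (Tm.inst c S T)
  | c, S, .loc a T => .loc a (Tm.inst c S T)
  | c, S, .fix T => .fix (Tm.inst (c + 1) (Tm.lift 0 S) T)

/-- All free variables are `< k`. -/
def Tm.ClosedAt : ℕ → Tm Chan → Prop
  | k, .var n => n < k
  | k, .sum _ _ T => ∀ i, Tm.ClosedAt k (T i)
  | k, .rand _ _ T => ∀ i, Tm.ClosedAt k (T i)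
  | k, .par S T => Tm.ClosedAt k S ∧ Tm.ClosedAt k T
  | k, .loc _ T => Tm.ClosedAt k T
  | k, .fix T => Tm.ClosedAt (k + 1) T

/-- Variable `v` is guarded: every free occurrence of `v` is under a prefix. -/
def Tm.Guarded : ℕ → Tm Chan → Prop
  | v, .var n => n ≠ v
  | _, .sum _ _ _ => True
  | _, .rand _ _ _ => True
  | v, .par S T => Tm.Guarded v S ∧ Tm.Guarded v T
  | v, .loc _ T => Tm.Guarded v T
  | v, .fix T => Tm.Guarded (v + 1) T

/-- Well-formedness: in every random choice `⊕_{i∈I} p_i τ.T_i` we have `|I| ≥ 2`,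
`p_i ∈ (0,1)` and `Σ_i p_i = 1`; in every fixpoint `μX.T` the variable `X` is
guarded in `T`. -/
def Tm.WF : Tm Chan → Prop
  | .var _ => True
  | .sum _ _ T => ∀ i, Tm.WF (T i)
  | .rand n p T => 2 ≤ n ∧ (∀ i, 0 < p i ∧ p i < 1) ∧ (∑ i, p i) = 1 ∧ ∀ i, Tm.WF (T i)
  | .par S T => Tm.WF S ∧ Tm.WF T
  | .loc _ T => Tm.WF T
  | .fix T => Tm.Guarded 0 T ∧ Tm.WF T

/-- A term with no random choice, i.e. a CCS term. -/
def Tm.NoRand : Tm Chan → Prop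
  | .var _ => True
  | .sum _ _ T => ∀ i, Tm.NoRand (T i)
  | .rand _ _ _ => False
  | .par S T => Tm.NoRand S ∧ Tm.NoRand T
  | .loc _ T => Tm.NoRand T
  | .fix T => Tm.NoRand T

/-- The transition relation of RCCS. -/
inductive Step : Tm Chan → Lab Chan → Tm Chan → Prop
  | sum {n α T} (i : Fin n) : Step (.sum n α T) (guardLab (α i)) (T i)
  | rand {n p T} (i : Fin n) : Step (.rand n p T) (.tau (p i)) (T i)
  | comL {S S' T T' a} : Step S (.name a) S' → Step T (.coname a) T' →
      Step (.par S T) (.tau 1) (.par S' T')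
  | comR {S S' T T' a} : Step S (.coname a) S' → Step T (.name a) T' →
      Step (.par S T) (.tau 1) (.par S' T')
  | parL {S S' T l} : Step S l S' → Step (.par S T) l (.par S' T)
  | parR {S T T' l} : Step T l T' → Step (.par S T) l (.par S T')
  | loc {T T' l} (a : Chan) : Step T l T' → l ≠ .name a → l ≠ .coname a →
      Step (.loc a T) l (.loc a T')
  | fix {T T' l} : Step (Tm.inst 0 (.fix T) T) l T' → Step (.fix T) l T'

/-- Collective silent transitions `B →^{∐_{i∈[n]} p_i τ} ∐_{i∈[n]} B_i`,
arising from a single random choice and closed under composition,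
localization and recursion. -/
inductive CStep : Tm Chan → (n : ℕ) → (Fin n → ℝ) → (Fin n → Tm Chan) → Prop
  | rand {n p T} : CStep (.rand n p T) n p T
  | parL {S T n p S'} : CStep S n p S' → CStep (.par S T) n p fun i => .par (S' i) T
  | parR {S T n p T'} : CStep T n p T' → CStep (.par S T) n p fun i => .par S (T' i)
  | loc {T n p T'} (a : Chan) : CStep T n p T' → CStep (.loc a T) n p fun i => .loc a (T' i)
  | fix {T n p T'} : CStep (Tm.inst 0 (.fix T) T) n p T' → CStep (.fix T) n p T'

/-- The set `P_RCCS` of RCCS processes: closed well-formed terms. -/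
def Proc (Chan : Type) : Type := {T : Tm Chan // T.ClosedAt 0 ∧ T.WF}

/-- A (potential) silent tree: nodes are addressed by reversed lists of child
indices (the root is `[]`, the `i`-th child of `σ` is `i :: σ`); each node
carries a process label and the probability labelling its incoming edge
(the root carries `1`). -/
structure PTree (Chan : Type) where
  node : List ℕ → Option (Proc Chan × ℝ)

namespace PTree

variable (t : PTree Chan)

/-- The address `σ` is a node of the tree. -/
def hasNode (σ : List ℕ) : Prop := (t.node σ).isSome

/-- The probability labelling the incoming edge of the node at `σ`. -/
def edgeProb (σ : List ℕ) : ℝ := ((t.node σ).map Prod.snd).getD 0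

/-- The probability of the path from the root to `σ`: the product of the edge
labels along it (`1` for the empty path). -/
def pathProb (t : PTree Chan) : List ℕ → ℝ
  | [] => 1
  | i :: σ => t.edgeProb (i :: σ) * pathProb t σ

/-- `σ` is a leaf. -/
def IsLeaf (σ : List ℕ) : Prop := t.hasNode σ ∧ ¬ t.hasNode (0 :: σ)

/-- `P(t↾_k)`: the sum of the probabilities of the branches of the truncation
of `t` at depth `k` (a branch of `t↾_k` ends either at depth `k` or at a leaf
of `t` of depth `< k`). -/
def truncProb (k : ℕ) : ℝ :=
  ∑' σ : List ℕ,
    if t.hasNode σ ∧ (σ.length = k ∨ (σ.length < k ∧ ¬ t.hasNode (0 :: σ)))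
    then t.pathProb σ else 0

/-- `P^k(t)`: the sum of the probabilities of the finite branches of `t` of
length at most `k`. -/
def finBranchProb (k : ℕ) : ℝ :=
  ∑' σ : List ℕ, if t.IsLeaf σ ∧ σ.length ≤ k then t.pathProb σ else 0

/-- `t` is regular: `P^f(t) = lim_k P^k(t) = 1`. -/
def Regular : Prop := Filter.Tendsto t.finBranchProb Filter.atTop (nhds 1)

/-- `t` is divergent: `P^f(t) = lim_k P^k(t) = 0`. -/
def Divergent : Prop := Filter.Tendsto t.finBranchProb Filter.atTop (nhds 0)

end PTree

/-- `t` is a silent tree of `A`: the root is labeled `A`, the node set is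
prefix-closed with children indexed by an initial segment of `ℕ`, the tree is
finitely branching, and every edge labeled `p` from `B` to `B'` satisfies
`p ∈ (0,1]` and `B →^{pτ} B'`. -/
def IsSilentTree (A : Proc Chan) (t : PTree Chan) : Prop :=
  t.node [] = some (A, 1) ∧
  (∀ i σ, t.hasNode (i :: σ) → t.hasNode σ) ∧
  (∀ i j σ, j ≤ i → t.hasNode (i :: σ) → t.hasNode (j :: σ)) ∧
  (∀ σ, ∃ n, ∀ i, n ≤ i → ¬ t.hasNode (i :: σ)) ∧
  (∀ σ i B p B' p', t.node σ = some (B, p) → t.node (i :: σ) = some (B', p') →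
    0 < p' ∧ p' ≤ 1 ∧ Step B.val (.tau p') B'.val)

/-- An ε-tree of `A` with regard to `E`: an `E`-tree of `A` (all node labels lie
in `[A]_E`) such that (1) any edge labeled `q < 1` out of a node `B` comes from a
collective random transition whose targets are exactly the children of `B`, and
(2) an edge labeled `1` out of `B` is a transition `B →^τ B'` to the unique
child `B'` of `B`. -/
def IsETree (E : Proc Chan → Proc Chan → Prop) (A : Proc Chan) (t : PTree Chan) : Prop :=
  IsSilentTree A t ∧
  (∀ σ B p, t.node σ = some (B, p) → E A B) ∧
  (∀ σ i B p B' q, t.node σ = some (B, p) → t.node (i :: σ) = some (B', q) → q < 1 →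
    ∃ n ps Ts, CStep B.val n ps Ts ∧
      (∀ j : ℕ, t.hasNode (j :: σ) ↔ j < n) ∧
      (∀ j : Fin n, ∃ C : Proc Chan, C.val = Ts j ∧ t.node ((j : ℕ) :: σ) = some (C, ps j))) ∧
  (∀ σ i B p B', t.node σ = some (B, p) → t.node (i :: σ) = some (B', 1) →
    Step B.val (.tau 1) B'.val ∧ i = 0 ∧ ¬ t.hasNode (1 :: σ))

/-- The `E`-class of `A`. -/
def classOf (E : Proc Chan → Proc Chan → Prop) (A : Proc Chan) : Set (Proc Chan) := {B | E A B}

/-- `C` is an equivalence class of `E`. -/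
def IsClass (E : Proc Chan → Proc Chan → Prop) (C : Set (Proc Chan)) : Prop :=
  ∃ A, C = classOf E A

/-- An equivalence `E` on `P_RCCS` is codivergent if for every `E`-class either
all members have a divergent ε-tree with regard to `E` or none does. -/
def Codivergent (E : Proc Chan → Proc Chan → Prop) : Prop :=
  ∀ A B, E A B →
    ((∃ t, IsETree E A t ∧ t.Divergent) ↔ (∃ t, IsETree E B t ∧ t.Divergent))

/-- An ℓ-transition `A ⇝_E →^ℓ C`: a regular ε-tree of `A` with regard to `E`
such that every leaf `L` has a transition `L →^ℓ L'` with `L' ∈ C`. -/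
def LTrans (E : Proc Chan → Proc Chan → Prop) (A : Proc Chan) (l : Lab Chan)
    (C : Set (Proc Chan)) : Prop :=
  ∃ t, IsETree E A t ∧ t.Regular ∧
    ∀ σ L p, t.node σ = some (L, p) → ¬ t.hasNode (0 :: σ) →
      ∃ L' ∈ C, Step L.val l L'.val

/-- The raw term `T` belongs to the set `C` of processes. -/
def inC (C : Set (Proc Chan)) (T : Tm Chan) : Prop := ∃ P ∈ C, P.val = T

/-- `P(L → C)` of a collective silent transition: the sum of the `p_i` whose
target lies in `C`. -/
def collProb (C : Set (Proc Chan)) {n : ℕ} (ps : Fin n → ℝ) (Ts : Fin n → Tm Chan) : ℝ :=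
  ∑ i, if inC C (Ts i) then ps i else 0

/-- A `q`-transition `A ⇝_E →^q C`: a regular ε-tree of `A` with regard to `E`
such that every leaf has a collective silent transition whose weighted
probability `P_E(L → C) = P(L → C)/(1 − P(L → [A]_E))` of reaching `C` is `q`. -/
def QTrans (E : Proc Chan → Proc Chan → Prop) (A : Proc Chan) (q : ℝ)
    (C : Set (Proc Chan)) : Prop :=
  ∃ t, IsETree E A t ∧ t.Regular ∧
    ∀ σ L p, t.node σ = some (L, p) → ¬ t.hasNode (0 :: σ) →
      ∃ (n : ℕ) (ps : Fin n → ℝ) (Ts : Fin n → Tm Chan), CStep L.val n ps Ts ∧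
        collProb C ps Ts / (1 - collProb (classOf E A) ps Ts) = q

/-- `E` is a branching bisimulation on `P_RCCS`: an equivalence such that
(1) ℓ-transitions with `ℓ ≠ τ ∨ C ≠ [A]_E` are bisimulated by all members of
`[A]_E`, and (2) likewise for `q`-transitions with `q ∈ (0,1]` and `C ≠ [A]_E`. -/
def IsBB (E : Proc Chan → Proc Chan → Prop) : Prop :=
  Equivalence E ∧
  (∀ A B l C, l.IsAct → IsClass E C → E A B → (l ≠ Lab.tau 1 ∨ C ≠ classOf E A) →
    LTrans E A l C → LTrans E B l C) ∧
  (∀ A B q C, 0 < q → q ≤ 1 → IsClass E C → E A B → C ≠ classOf E A →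
    QTrans E A q C → QTrans E B q C)

/-- `E` is a codivergent branching bisimulation on `P_RCCS`. -/
def IsCBB (E : Proc Chan → Proc Chan → Prop) : Prop := IsBB E ∧ Codivergent E

/-- `=_RCCS`, the largest codivergent branching bisimulation: the union of all
codivergent branching bisimulations. -/
def RccsEq (A B : Proc Chan) : Prop := ∃ E, IsCBB E ∧ E A B

/-! ### Concrete processes -/

/-- The empty nondeterministic choice `0`. -/
def Tm.nil : Tm Chan := .sum 0 Fin.elim0 Fin.elim0

/-- The prefix `α.T`. -/
def pfx (g : Chan ⊕ Chan) (T : Tm Chan) : Tm Chan := .sum 1 (fun _ => g) (fun _ => T)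

/-- The binary choice `α₁.T₁ + α₂.T₂`. -/
def sum2 (g₁ g₂ : Chan ⊕ Chan) (T₁ T₂ : Tm Chan) : Tm Chan := .sum 2 ![g₁, g₂] ![T₁, T₂]

/-- The binary random choice `pτ.T₁ ⊕ qτ.T₂`. -/
def rand2 (p q : ℝ) (T₁ T₂ : Tm Chan) : Tm Chan := .rand 2 ![p, q] ![T₁, T₂]

/-- `a.0`. -/
def aNil (a : Chan) : Tm Chan := pfx (Sum.inl a) Tm.nil

/-- `c̄.0`. -/
def coNil (c : Chan) : Tm Chan := pfx (Sum.inr c) Tm.nil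

/-- `Ω_{½a} = μX.(½τ.a.0 ⊕ ½τ.X)`. -/
def omegaHalfTm (a : Chan) : Tm Chan := .fix (rand2 (1/2) (1/2) (aNil a) (.var 0))

lemma omegaHalf_spec (a : Chan) : (omegaHalfTm a).ClosedAt 0 ∧ (omegaHalfTm a).WF := by
  refine ⟨?_, ?_⟩ <;>
    simp [omegaHalfTm, rand2, aNil, pfx, Tm.nil, Tm.ClosedAt, Tm.WF, Tm.Guarded,
      Fin.forall_fin_two, Fin.sum_univ_two] <;> norm_num

/-- `Ω_{½a}` as a process. -/
def omegaHalfP (a : Chan) : Proc Chan := ⟨omegaHalfTm a, omegaHalf_spec a⟩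

lemma aNil_spec (a : Chan) : (aNil a).ClosedAt 0 ∧ (aNil a).WF := by
  refine ⟨?_, ?_⟩ <;> simp [aNil, pfx, Tm.nil, Tm.ClosedAt, Tm.WF]

/-- `a.0` as a process. -/
def aNilP (a : Chan) : Proc Chan := ⟨aNil a, aNil_spec a⟩

/-!
Put `Ω = μX.(pτ.T ⊕ qτ.X)` with `p + q = 1`. Running the loop until it exits gives a regular ε-tree
of `Ω` all of whose leaves are `T`, so `Ω` simulates every transition of `T`. Conversely `Ω` itself
can do nothing but stay inside the class `{Ω, T}`; hence a transition of `Ω` is already witnessed by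
some leaf `T` of its ε-tree, and `T` performs it with the one-node tree. Finally, every edge of an
ε-tree has positive probability, so divergent ε-trees are the leafless ones. They amount to sets of
processes closed under some silent branching of each member; such a set contains `T` if it contains
`Ω`, and `Ω` can be added to it if it contains `T`.
-/

open Filter Topology

/-! ### Closed terms -/

lemma Tm.ClosedAt.mono {T : Tm Chan} {k m : ℕ} (h : T.ClosedAt k) (hkm : k ≤ m) :
    T.ClosedAt m := by
  induction T generalizing k m with
  | var n => exact lt_of_lt_of_le h hkm
  | sum n α T ih => exact fun i => ih i (h i) hkm
  | rand n p T ih => exact fun i => ih i (h i) hkm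
  | par S T ihS ihT => exact ⟨ihS h.1 hkm, ihT h.2 hkm⟩
  | loc a T ih => exact ih h hkm
  | fix T ih => exact ih (k := k + 1) h (Nat.succ_le_succ hkm)

lemma Tm.ClosedAt.inst_eq {T : Tm Chan} {c : ℕ} (h : T.ClosedAt c) (S : Tm Chan) :
    Tm.inst c S T = T := by
  induction T generalizing c S with
  | var n => exact if_pos h
  | sum n α T ih => simp only [Tm.inst, fun i => ih i (h i) S]
  | rand n p T ih => simp only [Tm.inst, fun i => ih i (h i) S]
  | par U T ihU ihT => simp only [Tm.inst, ihU h.1, ihT h.2]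
  | loc a T ih => simp only [Tm.inst, ih h]
  | fix T ih => simp only [Tm.inst, ih (c := c + 1) h]

/-! ### Finite branches of silent trees -/

section SilentTree

variable {E : Proc Chan → Proc Chan → Prop} {A : Proc Chan} {t : PTree Chan}

lemma PTree.hasNode_iff_exists {σ : List ℕ} : t.hasNode σ ↔ ∃ B p, t.node σ = some (B, p) := by
  simp [PTree.hasNode, Option.isSome_iff_exists]

lemma PTree.finBranchProb_eq_zero_of_forall_not_isLeaf (h : ∀ σ, ¬ t.IsLeaf σ) :
    t.finBranchProb = 0 := by
  ext k
  simp [PTree.finBranchProb, h]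

lemma PTree.finBranchProb_eq_sum {k : ℕ} {s : Finset (List ℕ)}
    (hs : ∀ σ, σ ∈ s ↔ t.IsLeaf σ ∧ σ.length ≤ k) :
    t.finBranchProb k = ∑ σ ∈ s, t.pathProb σ := by
  rw [PTree.finBranchProb, tsum_eq_sum fun σ hσ => if_neg (mt (hs σ).2 hσ)]
  exact Finset.sum_congr rfl fun σ hσ => if_pos ((hs σ).1 hσ)

lemma PTree.Regular.exists_isLeaf (h : t.Regular) : ∃ σ, t.IsLeaf σ := by
  by_contra! hleaf
  rw [PTree.Regular, PTree.finBranchProb_eq_zero_of_forall_not_isLeaf hleaf] at h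
  exact zero_ne_one (tendsto_nhds_unique tendsto_const_nhds h)

lemma IsSilentTree.finite_setOf_hasNode_length_le (ht : IsSilentTree A t) (k : ℕ) :
    {σ | t.hasNode σ ∧ σ.length ≤ k}.Finite := by
  obtain ⟨-, hprefix, -, hfin, -⟩ := ht
  choose N hN using hfin
  induction k with
  | zero => exact (Set.finite_singleton []).subset fun σ hσ => by simpa using hσ.2
  | succ k ih =>
    refine ((Set.finite_singleton []).union
      (ih.biUnion fun σ _ => (Set.finite_Iio (N σ)).image (· :: σ))).subset ?_
    rintro (_ | ⟨i, σ⟩) ⟨hnode, hlen⟩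
    · exact .inl rfl
    · refine .inr (Set.mem_biUnion ⟨hprefix i σ hnode, by simpa using hlen⟩ ⟨i, ?_, rfl⟩)
      exact lt_of_not_ge fun hi => hN σ i hi hnode

lemma IsSilentTree.pathProb_pos (ht : IsSilentTree A t) {σ : List ℕ} (hσ : t.hasNode σ) :
    0 < t.pathProb σ := by
  obtain ⟨-, hprefix, -, -, hedge⟩ := ht
  induction σ with
  | nil => exact one_pos
  | cons i σ ih =>
    have hparent := hprefix i σ hσ
    obtain ⟨B, p, hB⟩ := PTree.hasNode_iff_exists.1 hparent
    obtain ⟨B', p', hB'⟩ := PTree.hasNode_iff_exists.1 hσ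
    have hp' : 0 < p' := (hedge σ i B p B' p' hB hB').1
    exact mul_pos (by simpa [PTree.edgeProb, hB'] using hp') (ih hparent)

lemma IsSilentTree.pathProb_le_finBranchProb (ht : IsSilentTree A t) {σ : List ℕ} {k : ℕ}
    (hσ : t.IsLeaf σ) (hk : σ.length ≤ k) : t.pathProb σ ≤ t.finBranchProb k := by
  have hsummable : Summable fun σ : List ℕ =>
      if t.IsLeaf σ ∧ σ.length ≤ k then t.pathProb σ else 0 := by
    refine summable_of_hasFiniteSupport
      ((ht.finite_setOf_hasNode_length_le k).subset fun τ hτ => ?_)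
    have hleaf := of_not_not (mt (if_neg ·) hτ)
    exact ⟨hleaf.1.1, hleaf.2⟩
  have hle := hsummable.le_tsum σ fun τ _ => by
    split_ifs with hτ
    exacts [(ht.pathProb_pos hτ.1.1).le, le_rfl]
  rwa [if_pos ⟨hσ, hk⟩] at hle

lemma IsSilentTree.divergent_iff (ht : IsSilentTree A t) :
    t.Divergent ↔ ∀ σ, ¬ t.IsLeaf σ := by
  constructor
  · intro hdiv σ hσ
    have hle : ∀ᶠ k in atTop, t.pathProb σ ≤ t.finBranchProb k :=
      (eventually_ge_atTop σ.length).mono fun k hk => ht.pathProb_le_finBranchProb hσ hk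
    exact (ht.pathProb_pos hσ.1).not_ge (ge_of_tendsto hdiv hle)
  · intro hleaf
    rw [PTree.Divergent, PTree.finBranchProb_eq_zero_of_forall_not_isLeaf hleaf]
    exact tendsto_const_nhds

end SilentTree

/-! ### Branchings and unfolded trees -/

lemma CStep.step {B : Tm Chan} {n : ℕ} {p : Fin n → ℝ} {T : Fin n → Tm Chan}
    (h : CStep B n p T) (i : Fin n) : Step B (.tau (p i)) (T i) := by
  induction h with
  | rand => exact .rand i
  | parL _ ih => exact .parL (ih i)
  | parR _ ih => exact .parR (ih i)
  | loc a _ ih => exact .loc a (ih i) nofun nofun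
  | fix _ ih => exact .fix (ih i)

/-- The lists of children, each with the probability of its edge, that an internal node labeled `B`
of an ε-tree can have: a single child for a `τ`-transition, or the targets of a collective random
transition. -/
inductive IsBranching (B : Proc Chan) : List (Proc Chan × ℝ) → Prop
  | tau {B' : Proc Chan} : Step B.val (.tau 1) B'.val → IsBranching B [(B', 1)]
  | rand {n : ℕ} {p : Fin n → ℝ} {C : Fin n → Proc Chan} : n ≠ 0 →
      CStep B.val n p (fun i => (C i).val) → (∀ i, 0 < p i ∧ p i < 1) →
      IsBranching B (List.ofFn fun i => (C i, p i))

section Branching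

variable {E : Proc Chan → Proc Chan → Prop} {A B : Proc Chan} {t : PTree Chan}
  {cs : List (Proc Chan × ℝ)}

lemma IsBranching.ne_nil (h : IsBranching B cs) : cs ≠ [] := by
  cases h with
  | tau => simp
  | rand hn => simpa [List.ofFn_eq_nil_iff] using hn

lemma IsBranching.edge (h : IsBranching B cs) {c : Proc Chan × ℝ} (hc : c ∈ cs) :
    0 < c.2 ∧ c.2 ≤ 1 ∧ Step B.val (.tau c.2) c.1.val := by
  cases h with
  | tau hstep =>
    obtain rfl := List.mem_singleton.1 hc
    exact ⟨one_pos, le_rfl, hstep⟩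
  | rand _ hstep hp =>
    obtain ⟨i, rfl⟩ := List.mem_ofFn.1 hc
    exact ⟨(hp i).1, (hp i).2.le, hstep.step i⟩

lemma IsETree.exists_children (ht : IsETree E A t) {σ : List ℕ} {p : ℝ}
    (hσ : t.node σ = some (B, p)) :
    ∃ cs, (cs = [] ∨ IsBranching B cs) ∧ ∀ i, t.node (i :: σ) = cs[i]? := by
  obtain ⟨⟨-, -, hinit, -, hedge⟩, -, hrand, htau⟩ := ht
  have node_eq_none {i j : ℕ} (hji : j ≤ i) (hj : ¬ t.hasNode (j :: σ)) :
      t.node (i :: σ) = none :=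
    Option.not_isSome_iff_eq_none.1 fun hi => hj (hinit i j σ hji hi)
  by_cases h0 : t.hasNode (0 :: σ)
  swap
  · exact ⟨[], .inl rfl, fun i => node_eq_none i.zero_le h0⟩
  obtain ⟨B', q, hB'⟩ := PTree.hasNode_iff_exists.1 h0
  rcases (hedge σ 0 B p B' q hσ hB').2.1.eq_or_lt with rfl | hq
  · obtain ⟨hstep, -, h1⟩ := htau σ 0 B p B' hσ hB'
    refine ⟨[(B', 1)], .inr (.tau hstep), fun i => ?_⟩
    rcases i with _ | i
    · exact hB'
    · exact node_eq_none (Nat.succ_le_succ i.zero_le) h1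
  · obtain ⟨n, ps, Ts, hstep, hn, hchild⟩ := hrand σ 0 B p B' q hσ hB' hq
    choose C hC hnode using hchild
    obtain rfl : (fun j => (C j).val) = Ts := funext hC
    have hps (j : Fin n) : 0 < ps j ∧ ps j < 1 := by
      obtain ⟨hpos, hle, -⟩ := hedge σ j B p _ _ hσ (hnode j)
      refine ⟨hpos, hle.lt_of_ne fun hj1 => ?_⟩
      have hj := hnode j
      rw [hj1] at hj
      rw [(htau σ j B p _ hσ hj).2.1, hB'] at hj
      exact hq.ne (congrArg Prod.snd (Option.some.inj hj))
    refine ⟨List.ofFn fun j => (C j, ps j), .inr (.rand ((hn 0).1 h0).ne' hstep hps), fun i => ?_⟩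
    rw [List.getElem?_ofFn]
    split_ifs with hi
    · exact hnode ⟨i, hi⟩
    · exact Option.not_isSome_iff_eq_none.1 fun h => hi ((hn i).1 h)

lemma isETree_of_children (hroot : t.node [] = some (A, 1))
    (hprefix : ∀ i σ, t.hasNode (i :: σ) → t.hasNode σ)
    (hE : ∀ σ B p, t.node σ = some (B, p) → E A B)
    (hchildren : ∀ σ B p, t.node σ = some (B, p) →
      ∃ cs, (cs = [] ∨ IsBranching B cs) ∧ ∀ i, t.node (i :: σ) = cs[i]?) :
    IsETree E A t := by
  have branching_of_node {σ i B p c} (hB : t.node σ = some (B, p)) (hc : t.node (i :: σ) = some c) :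
      ∃ cs, IsBranching B cs ∧ (∀ j, t.node (j :: σ) = cs[j]?) ∧ cs[i]? = some c := by
    obtain ⟨cs, rfl | hcs, hnode⟩ := hchildren σ B p hB
    · exact absurd (hc.symm.trans (hnode i)) (by simp)
    · exact ⟨cs, hcs, hnode, hnode i ▸ hc⟩
  have exists_length (σ : List ℕ) : ∃ n, ∀ i, t.hasNode (i :: σ) ↔ i < n := by
    by_cases hσ : t.hasNode σ
    · obtain ⟨B, p, hB⟩ := PTree.hasNode_iff_exists.1 hσ
      obtain ⟨cs, -, hcs⟩ := hchildren σ B p hB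
      exact ⟨cs.length, fun i => by simp [PTree.hasNode, hcs]⟩
    · exact ⟨0, fun i => by simpa using mt (hprefix i σ) hσ⟩
  refine ⟨⟨hroot, hprefix, fun i j σ hji hi => ?_, fun σ => ?_, fun σ i B p B' p' hB hB' => ?_⟩,
    hE, fun σ i B p B' q hB hB' hq => ?_, fun σ i B p B' hB hB' => ?_⟩
  · obtain ⟨n, hn⟩ := exists_length σ
    exact (hn j).2 (hji.trans_lt ((hn i).1 hi))
  · obtain ⟨n, hn⟩ := exists_length σ
    exact ⟨n, fun i hi => mt (hn i).1 hi.not_gt⟩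
  · obtain ⟨cs, hcs, -, hi⟩ := branching_of_node hB hB'
    exact hcs.edge (List.mem_of_getElem? hi)
  · obtain ⟨cs, hcs, hnode, hi⟩ := branching_of_node hB hB'
    cases hcs with
    | tau =>
      obtain ⟨-, rfl⟩ := Prod.mk.inj (List.mem_singleton.1 (List.mem_of_getElem? hi))
      exact absurd hq (lt_irrefl 1)
    | @rand n ps C _ hstep _ =>
      exact ⟨n, ps, _, hstep, fun j => by simp [PTree.hasNode, hnode],
        fun j => ⟨C j, rfl, by simp [hnode]⟩⟩
  · obtain ⟨cs, hcs, hnode, hi⟩ := branching_of_node hB hB'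
    cases hcs with
    | tau hstep =>
      rcases i with _ | i
      · obtain ⟨rfl, -⟩ := Prod.mk.inj (List.mem_singleton.1 (List.mem_of_getElem? hi))
        exact ⟨hstep, rfl, by simp [PTree.hasNode, hnode]⟩
      · simp at hi
    | rand _ _ hp =>
      obtain ⟨j, hj⟩ := List.mem_ofFn.1 (List.mem_of_getElem? hi)
      exact absurd (congrArg Prod.snd hj) (hp j).2.ne

end Branching

namespace PTree

section Unfold

variable {S : Type*} (label : S → Proc Chan) (next : S → List (S × ℝ)) (s : S)

/-- The state reached at an address when `next` is unfolded from `s`, with the probability of the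
last edge. -/
def unfoldState : List ℕ → Option (S × ℝ)
  | [] => some (s, 1)
  | i :: σ => (unfoldState σ).bind fun x => (next x.1)[i]?

/-- The tree obtained by unfolding from the state `s` the transition system `next` on `S`, each
state `x` carrying the process `label x`. -/
def unfold : PTree Chan where
  node σ := (unfoldState next s σ).map (Prod.map label id)

variable {label next s}

lemma node_unfold_eq_some {σ : List ℕ} {B : Proc Chan} {p : ℝ}
    (h : (unfold label next s).node σ = some (B, p)) :
    ∃ x, unfoldState next s σ = some (x, p) ∧ label x = B := by
  obtain ⟨⟨x, r⟩, hx, hBp⟩ := Option.map_eq_some_iff.1 h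
  obtain ⟨rfl, rfl⟩ := Prod.mk.inj hBp
  exact ⟨x, hx, rfl⟩

lemma node_unfold_cons {σ : List ℕ} {x : S} {p : ℝ} (h : unfoldState next s σ = some (x, p))
    (i : ℕ) :
    (unfold label next s).node (i :: σ) = ((next x).map (Prod.map label id))[i]? := by
  simp [unfold, unfoldState, h]

lemma isLeaf_unfold_iff {σ : List ℕ} :
    (unfold label next s).IsLeaf σ ↔ ∃ x p, unfoldState next s σ = some (x, p) ∧ next x = [] := by
  constructor
  · rintro ⟨hσ, hleaf⟩
    obtain ⟨B, p, hB⟩ := hasNode_iff_exists.1 hσ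
    obtain ⟨x, hx, -⟩ := node_unfold_eq_some hB
    exact ⟨x, p, hx, by simpa [hasNode, node_unfold_cons hx] using hleaf⟩
  · rintro ⟨x, p, hx, hnil⟩
    exact ⟨by simp [hasNode, unfold, hx], by simp [hasNode, node_unfold_cons hx, hnil]⟩

lemma isETree_unfold {E : Proc Chan → Proc Chan → Prop} (hE : ∀ x, E (label s) (label x))
    (hnext : ∀ x, next x = [] ∨ IsBranching (label x) ((next x).map (Prod.map label id))) :
    IsETree E (label s) (unfold label next s) := by
  refine isETree_of_children rfl (fun i σ h => ?_) (fun σ B p hB => ?_) (fun σ B p hB => ?_)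
  · cases hσ : unfoldState next s σ with
    | none => simp [hasNode, unfold, unfoldState, hσ] at h
    | some x => simp [hasNode, unfold, hσ]
  · obtain ⟨x, -, rfl⟩ := node_unfold_eq_some hB
    exact hE x
  · obtain ⟨x, hx, rfl⟩ := node_unfold_eq_some hB
    exact ⟨_, (hnext x).imp_left fun h => by simp [h], node_unfold_cons hx⟩

end Unfold

end PTree

/-! ### Divergence -/

/-- Every member of `D` has a silent branching that stays inside `D`. -/
def IsSilentlyClosed (D : Set (Proc Chan)) : Prop :=
  ∀ B ∈ D, ∃ cs, IsBranching B cs ∧ ∀ c ∈ cs, c.1 ∈ D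

section Divergence

variable {E : Proc Chan → Proc Chan → Prop} {A : Proc Chan}

lemma IsETree.isSilentlyClosed_of_divergent {t : PTree Chan} (ht : IsETree E A t)
    (hdiv : t.Divergent) : IsSilentlyClosed {B | ∃ σ p, t.node σ = some (B, p)} := by
  rintro B ⟨σ, p, hB⟩
  obtain ⟨cs, hcs, hnode⟩ := ht.exists_children hB
  refine ⟨cs, hcs.resolve_left ?_, fun c hc => ?_⟩
  · rintro rfl
    exact ht.1.divergent_iff.1 hdiv σ ⟨by simp [PTree.hasNode, hB], by simp [PTree.hasNode, hnode]⟩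
  · obtain ⟨i, hi⟩ := List.mem_iff_getElem?.1 hc
    exact ⟨i :: σ, c.2, (hnode i).trans hi⟩

lemma IsSilentlyClosed.exists_divergent_isETree {D : Set (Proc Chan)} (hD : IsSilentlyClosed D)
    (hA : A ∈ D) (hE : D ⊆ classOf E A) : ∃ t, IsETree E A t ∧ t.Divergent := by
  choose next hnext hmem using fun B : D => hD B B.2
  let nextD (B : D) : List (D × ℝ) :=
    (next B).attach.map fun c => (⟨c.1.1, hmem B c.1 c.2⟩, c.1.2)
  have map_nextD (B : D) : (nextD B).map (Prod.map Subtype.val id) = next B := by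
    simpa [nextD, Function.comp_def] using (next B).attach_map_subtype_val
  have ht : IsETree E A (PTree.unfold Subtype.val nextD ⟨A, hA⟩) :=
    PTree.isETree_unfold (s := (⟨A, hA⟩ : D)) (fun B => hE B.2)
      fun B => .inr (by simpa only [map_nextD] using hnext B)
  refine ⟨_, ht, ht.1.divergent_iff.2 fun σ hσ => ?_⟩
  obtain ⟨B, -, -, hB⟩ := PTree.isLeaf_unfold_iff.1 hσ
  exact (hnext B).ne_nil (by rw [← map_nextD, hB, List.map_nil])

theorem exists_divergent_isETree_iff :
    (∃ t, IsETree E A t ∧ t.Divergent) ↔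
      ∃ D : Set (Proc Chan), IsSilentlyClosed D ∧ A ∈ D ∧ D ⊆ classOf E A := by
  constructor
  · rintro ⟨t, ht, hdiv⟩
    refine ⟨_, ht.isSilentlyClosed_of_divergent hdiv, ⟨[], 1, ht.1.1⟩, ?_⟩
    rintro B ⟨σ, p, hB⟩
    exact ht.2.1 σ B p hB
  · rintro ⟨D, hD, hA, hE⟩
    exact hD.exists_divergent_isETree hA hE

end Divergence

/-! ### Regular reachability -/

/-- Some regular ε-tree of `A` has only leaves satisfying `Φ`: the common shape of ℓ-transitions and
`q`-transitions. -/
def ReachesRegularly (E : Proc Chan → Proc Chan → Prop) (A : Proc Chan) (Φ : Proc Chan → Prop) :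
    Prop :=
  ∃ t, IsETree E A t ∧ t.Regular ∧
    ∀ σ L p, t.node σ = some (L, p) → ¬ t.hasNode (0 :: σ) → Φ L

/-- `L` has a collective silent transition whose weighted probability of reaching `C`, conditioned
on leaving `K`, is `q`. -/
def HasWeightedStep (K : Set (Proc Chan)) (q : ℝ) (C : Set (Proc Chan)) (L : Proc Chan) : Prop :=
  ∃ (n : ℕ) (ps : Fin n → ℝ) (Ts : Fin n → Tm Chan), CStep L.val n ps Ts ∧
    collProb C ps Ts / (1 - collProb K ps Ts) = q

section Reach

variable {E : Proc Chan → Proc Chan → Prop} {A : Proc Chan} {Φ : Proc Chan → Prop}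

lemma lTrans_iff_reachesRegularly {l : Lab Chan} {C : Set (Proc Chan)} :
    LTrans E A l C ↔ ReachesRegularly E A fun L => ∃ L' ∈ C, Step L.val l L'.val :=
  .rfl

lemma qTrans_iff_reachesRegularly {q : ℝ} {C : Set (Proc Chan)} :
    QTrans E A q C ↔ ReachesRegularly E A (HasWeightedStep (classOf E A) q C) :=
  .rfl

lemma classOf_eq_of_rel {B : Proc Chan} (hE : Equivalence E) (h : E A B) :
    classOf E A = classOf E B :=
  Set.ext fun _ => ⟨hE.trans (hE.symm h), hE.trans h⟩

lemma ReachesRegularly.exists_rel (h : ReachesRegularly E A Φ) : ∃ L, E A L ∧ Φ L := by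
  obtain ⟨t, ht, hreg, hΦ⟩ := h
  obtain ⟨σ, hσ, hleaf⟩ := hreg.exists_isLeaf
  obtain ⟨L, p, hL⟩ := PTree.hasNode_iff_exists.1 hσ
  exact ⟨L, ht.2.1 σ L p hL, hΦ σ L p hL hleaf⟩

lemma reachesRegularly_unfold {S : Type*} {label : S → Proc Chan} {next : S → List (S × ℝ)} {s : S}
    (hE : ∀ x, E (label s) (label x))
    (hnext : ∀ x, next x = [] ∨ IsBranching (label x) ((next x).map (Prod.map label id)))
    (hreg : (PTree.unfold label next s).Regular) (hΦ : ∀ x, next x = [] → Φ (label x)) :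
    ReachesRegularly E (label s) Φ := by
  refine ⟨_, PTree.isETree_unfold hE hnext, hreg, fun σ L p hL hleaf => ?_⟩
  obtain ⟨x, hx, rfl⟩ := PTree.node_unfold_eq_some hL
  exact hΦ x (by simpa [PTree.hasNode, PTree.node_unfold_cons hx] using hleaf)

lemma ReachesRegularly.of_self (hA : E A A) (hΦ : Φ A) : ReachesRegularly E A Φ := by
  refine reachesRegularly_unfold (label := fun _ : Unit => A) (next := fun _ => []) (s := ())
    (fun _ => hA) (fun _ => .inl rfl) ?_ (fun _ _ => hΦ)
  refine tendsto_const_nhds.congr fun k => ?_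
  have hleaf (σ : List ℕ) : σ ∈ ({[]} : Finset (List ℕ)) ↔
      (PTree.unfold (fun _ : Unit => A) (fun _ => []) ()).IsLeaf σ ∧ σ.length ≤ k := by
    cases σ <;> simp [PTree.isLeaf_unfold_iff, PTree.unfoldState]
  rw [PTree.finBranchProb_eq_sum hleaf, Finset.sum_singleton, PTree.pathProb]

end Reach

/-! ### Probabilistic loops -/

section LoopChain

variable {p q : ℝ} {label : Bool → Proc Chan}

/-- The transitions of the two-state chain behind `Proc.loop`: `true` is the loop and `false` the
exit. -/
def loopNext (p q : ℝ) : Bool → List (Bool × ℝ)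
  | true => [(false, p), (true, q)]
  | false => []

lemma loopNext_eq_nil_iff {b : Bool} : loopNext p q b = [] ↔ b = false := by
  cases b <;> simp [loopNext]

lemma unfoldState_loopNext_replicate (n : ℕ) :
    ∃ r, PTree.unfoldState (loopNext p q) true (List.replicate n 1) = some (true, r) := by
  induction n with
  | zero => exact ⟨1, rfl⟩
  | succ n ih =>
    obtain ⟨r, hr⟩ := ih
    exact ⟨q, by simp [List.replicate_succ, PTree.unfoldState, hr, loopNext]⟩

lemma eq_replicate_of_unfoldState_loopNext {σ : List ℕ} {r : ℝ}
    (h : PTree.unfoldState (loopNext p q) true σ = some (true, r)) :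
    σ = List.replicate σ.length 1 := by
  induction σ generalizing r with
  | nil => rfl
  | cons i σ ih =>
    obtain ⟨⟨_ | _, s⟩, hσ, hi⟩ := Option.bind_eq_some_iff.1 h
    · simp [loopNext] at hi
    · rcases i with _ | _ | i
      · simp [loopNext] at hi
      · rw [List.length_cons, List.replicate_succ, ← ih hσ]
      · simp [loopNext] at hi

lemma isLeaf_unfold_loopNext_iff {σ : List ℕ} :
    (PTree.unfold label (loopNext p q) true).IsLeaf σ ↔ ∃ n, 0 :: List.replicate n 1 = σ := by
  simp only [PTree.isLeaf_unfold_iff, loopNext_eq_nil_iff]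
  constructor
  · rintro ⟨_, r, hσ, rfl⟩
    rcases σ with _ | ⟨i, σ⟩
    · simp [PTree.unfoldState] at hσ
    obtain ⟨⟨_ | _, s⟩, hτ, hi⟩ := Option.bind_eq_some_iff.1 hσ
    · simp [loopNext] at hi
    · rcases i with _ | _ | i
      · exact ⟨σ.length, by rw [← eq_replicate_of_unfoldState_loopNext hτ]⟩
      · simp [loopNext] at hi
      · simp [loopNext] at hi
  · rintro ⟨n, rfl⟩
    obtain ⟨r, hr⟩ := unfoldState_loopNext_replicate (p := p) (q := q) n
    exact ⟨false, p, by simp [PTree.unfoldState, hr, loopNext], rfl⟩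

lemma edgeProb_unfold_loopNext (i n : ℕ) :
    (PTree.unfold label (loopNext p q) true).edgeProb (i :: List.replicate n 1) =
      (([p, q] : List ℝ)[i]?).getD 0 := by
  obtain ⟨r, hr⟩ := unfoldState_loopNext_replicate (p := p) (q := q) n
  rw [PTree.edgeProb, PTree.node_unfold_cons hr]
  rcases i with _ | _ | i <;> simp [loopNext]

lemma pathProb_unfold_loopNext_replicate (n : ℕ) :
    (PTree.unfold label (loopNext p q) true).pathProb (List.replicate n 1) = q ^ n := by
  induction n with
  | zero => rfl
  | succ n ih => simp [List.replicate_succ, PTree.pathProb, ih, edgeProb_unfold_loopNext, pow_succ']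

lemma finBranchProb_unfold_loopNext (hpq : p + q = 1) (k : ℕ) :
    (PTree.unfold label (loopNext p q) true).finBranchProb k = 1 - q ^ k := by
  have hinj : Function.Injective fun n : ℕ => 0 :: List.replicate n 1 := fun m n h => by
    simpa using congrArg List.length h
  have hleaf (σ : List ℕ) : σ ∈ (Finset.range k).map ⟨fun n => 0 :: List.replicate n 1, hinj⟩ ↔
      (PTree.unfold label (loopNext p q) true).IsLeaf σ ∧ σ.length ≤ k := by
    rw [isLeaf_unfold_loopNext_iff]
    simp only [Finset.mem_map, Finset.mem_range, Function.Embedding.coeFn_mk]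
    constructor
    · rintro ⟨n, hn, rfl⟩
      exact ⟨⟨n, rfl⟩, by simpa using hn⟩
    · rintro ⟨⟨n, rfl⟩, hn⟩
      exact ⟨n, by simpa using hn, rfl⟩
  rw [PTree.finBranchProb_eq_sum hleaf, Finset.sum_map]
  calc ∑ n ∈ Finset.range k, (PTree.unfold label (loopNext p q) true).pathProb
        (0 :: List.replicate n 1)
      = ∑ n ∈ Finset.range k, (1 - q) * q ^ n := by
        simp [PTree.pathProb, edgeProb_unfold_loopNext, pathProb_unfold_loopNext_replicate,
          ← eq_sub_of_add_eq hpq]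
    _ = 1 - q ^ k := by rw [← Finset.mul_sum, mul_neg_geom_sum]

lemma regular_unfold_loopNext (hp : 0 < p) (hq : 0 ≤ q) (hpq : p + q = 1) :
    (PTree.unfold label (loopNext p q) true).Regular := by
  have hlim : Tendsto (fun k => 1 - q ^ k) atTop (𝓝 (1 - 0)) :=
    (tendsto_pow_atTop_nhds_zero_of_lt_one hq (by linarith)).const_sub 1
  rw [sub_zero] at hlim
  exact hlim.congr fun k => (finBranchProb_unfold_loopNext hpq k).symm

end LoopChain

section Loop

variable {p q : ℝ} (hp : 0 < p) (hq : 0 < q) (hpq : p + q = 1) (T : Proc Chan)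

/-- The process `μX.(pτ.T ⊕ qτ.X)`, which keeps looping until it exits to `T`. -/
def Proc.loop : Proc Chan :=
  ⟨.fix (rand2 p q T.val (.var 0)),
    by simpa [Tm.ClosedAt, rand2, Fin.forall_fin_two] using T.2.1.mono zero_le_one,
    by
      have hp1 : p < 1 := by linarith
      have hq1 : q < 1 := by linarith
      simp [Tm.WF, Tm.Guarded, rand2, Fin.forall_fin_two, Fin.sum_univ_two, *, T.2.2]⟩

lemma Proc.inst_loop :
    Tm.inst 0 (T.loop hp hq hpq).val (rand2 p q T.val (.var 0)) =
      rand2 p q T.val (T.loop hp hq hpq).val := by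
  simp only [rand2, Tm.inst, Tm.rand.injEq, heq_eq_eq, true_and]
  funext i
  fin_cases i
  exacts [T.2.1.inst_eq _, rfl]

variable {hp hq hpq T}

lemma step_loop_iff {l : Lab Chan} {T' : Tm Chan} :
    Step (T.loop hp hq hpq).val l T' ↔ Step (rand2 p q T.val (T.loop hp hq hpq).val) l T' := by
  rw [← Proc.inst_loop]
  exact ⟨fun | .fix h => h, .fix⟩

lemma cstep_loop_iff {n : ℕ} {ps : Fin n → ℝ} {Ts : Fin n → Tm Chan} :
    CStep (T.loop hp hq hpq).val n ps Ts ↔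
      CStep (rand2 p q T.val (T.loop hp hq hpq).val) n ps Ts := by
  rw [← Proc.inst_loop]
  exact ⟨fun | .fix h => h, .fix⟩

lemma not_step_loop_of_isAct {l : Lab Chan} (hl : l.IsAct) {T' : Tm Chan} :
    ¬ Step (T.loop hp hq hpq).val l T' := by
  rw [step_loop_iff]
  rintro (_ | ⟨i⟩)
  fin_cases i <;> simp [Lab.IsAct] at hl <;> linarith

lemma isBranching_loop_iff {cs : List (Proc Chan × ℝ)} :
    IsBranching (T.loop hp hq hpq) cs ↔ cs = [(T, p), (T.loop hp hq hpq, q)] := by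
  have hC : (fun i => (![T, T.loop hp hq hpq] i).val) = ![T.val, (T.loop hp hq hpq).val] := by
    funext i
    fin_cases i <;> rfl
  constructor
  · rintro (hstep | @⟨n, ps, C, -, hstep, -⟩)
    · exact absurd hstep (not_step_loop_of_isAct (l := .tau 1) rfl)
    · rw [cstep_loop_iff] at hstep
      generalize hTs : (fun i => (C i).val) = Ts at hstep
      cases hstep
      obtain rfl : C = ![T, T.loop hp hq hpq] :=
        funext fun i => Subtype.ext (congrFun (hTs.trans hC.symm) i)
      simp
  · rintro rfl
    have hstep : CStep (T.loop hp hq hpq).val 2 ![p, q]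
        fun i => (![T, T.loop hp hq hpq] i).val := by
      rw [cstep_loop_iff, hC]
      exact .rand
    simpa using IsBranching.rand two_ne_zero hstep
      (Fin.forall_fin_two.2 ⟨⟨hp, by simp; linarith⟩, ⟨hq, by simp; linarith⟩⟩)

lemma collProb_eq_one_of_cstep_loop {C : Set (Proc Chan)} (hT : T ∈ C)
    (hloop : T.loop hp hq hpq ∈ C) {n : ℕ} {ps : Fin n → ℝ} {Ts : Fin n → Tm Chan}
    (h : CStep (T.loop hp hq hpq).val n ps Ts) : collProb C ps Ts = 1 := by
  rw [cstep_loop_iff] at h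
  cases h
  have hT' : inC C T.val := ⟨T, hT, rfl⟩
  have hloop' : inC C (T.loop hp hq hpq).val := ⟨_, hloop, rfl⟩
  simpa [collProb, Fin.sum_univ_two, hT', hloop'] using hpq

lemma not_hasWeightedStep_loop {K C : Set (Proc Chan)} (hT : T ∈ K) (hloop : T.loop hp hq hpq ∈ K)
    {r : ℝ} (hr : 0 < r) : ¬ HasWeightedStep K r C (T.loop hp hq hpq) := by
  rintro ⟨n, ps, Ts, hstep, hprob⟩
  -- All the mass stays in `K`, so the weighted probability is a quotient by `0`, hence `0`.
  rw [collProb_eq_one_of_cstep_loop hT hloop hstep, sub_self, div_zero] at hprob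
  exact hr.ne hprob

lemma exists_divergent_isETree_loop_iff {E : Proc Chan → Proc Chan → Prop} (hE : Equivalence E)
    (hET : E (T.loop hp hq hpq) T) :
    (∃ t, IsETree E (T.loop hp hq hpq) t ∧ t.Divergent) ↔ ∃ t, IsETree E T t ∧ t.Divergent := by
  simp only [exists_divergent_isETree_iff]
  constructor
  · rintro ⟨D, hD, hloop, hDE⟩
    obtain ⟨cs, hcs, hmem⟩ := hD _ hloop
    obtain rfl := isBranching_loop_iff.1 hcs
    exact ⟨D, hD, hmem (T, p) (by simp), fun B hB => hE.trans (hE.symm hET) (hDE hB)⟩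
  · rintro ⟨D, hD, hT, hDE⟩
    refine ⟨insert (T.loop hp hq hpq) D, ?_, Set.mem_insert _ _,
      Set.insert_subset (hE.refl _) fun B hB => hE.trans hET (hDE hB)⟩
    rintro B (rfl | hB)
    · exact ⟨_, isBranching_loop_iff.2 rfl, by simp [hT]⟩
    · obtain ⟨cs, hcs, hmem⟩ := hD B hB
      exact ⟨cs, hcs, fun c hc => .inr (hmem c hc)⟩

section Reach

variable {E : Proc Chan → Proc Chan → Prop} {Φ : Proc Chan → Prop}

lemma ReachesRegularly.loop (hloop : E (T.loop hp hq hpq) (T.loop hp hq hpq))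
    (hET : E (T.loop hp hq hpq) T) (hΦ : Φ T) : ReachesRegularly E (T.loop hp hq hpq) Φ := by
  have hbranch : IsBranching (T.loop hp hq hpq) [(T, p), (T.loop hp hq hpq, q)] :=
    isBranching_loop_iff.2 rfl
  refine reachesRegularly_unfold (label := fun b => cond b (T.loop hp hq hpq) T)
    (next := loopNext p q) (s := true) ?_ ?_ (regular_unfold_loopNext hp hq.le hpq) ?_
  · rintro (_ | _)
    exacts [hET, hloop]
  · rintro (_ | _)
    exacts [.inl rfl, .inr hbranch]
  · rintro (_ | _) hb
    exacts [hΦ, absurd (loopNext_eq_nil_iff.1 hb) (by simp)]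

lemma reachesRegularly_loop_iff (hE : Equivalence E) (hET : E (T.loop hp hq hpq) T)
    (hclass : classOf E (T.loop hp hq hpq) ⊆ {T.loop hp hq hpq, T})
    (hΦ : ¬ Φ (T.loop hp hq hpq)) :
    ReachesRegularly E (T.loop hp hq hpq) Φ ↔ ReachesRegularly E T Φ := by
  have of_rel {L : Proc Chan} (hL : E (T.loop hp hq hpq) L) (hΦL : Φ L) : Φ T := by
    rcases hclass hL with rfl | rfl
    exacts [absurd hΦL hΦ, hΦL]
  constructor <;> intro h <;> obtain ⟨L, hL, hΦL⟩ := h.exists_rel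
  · exact .of_self (hE.refl T) (of_rel hL hΦL)
  · exact .loop (hE.refl _) hET (of_rel (hE.trans hET hL) hΦL)

lemma lTrans_loop_iff (hE : Equivalence E) (hET : E (T.loop hp hq hpq) T)
    (hclass : classOf E (T.loop hp hq hpq) ⊆ {T.loop hp hq hpq, T}) {l : Lab Chan} (hl : l.IsAct)
    {C : Set (Proc Chan)} : LTrans E (T.loop hp hq hpq) l C ↔ LTrans E T l C := by
  simp only [lTrans_iff_reachesRegularly]
  exact reachesRegularly_loop_iff hE hET hclass
    fun ⟨_, _, hstep⟩ => not_step_loop_of_isAct hl hstep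

lemma qTrans_loop_iff (hE : Equivalence E) (hET : E (T.loop hp hq hpq) T)
    (hclass : classOf E (T.loop hp hq hpq) ⊆ {T.loop hp hq hpq, T}) {r : ℝ} (hr : 0 < r)
    {C : Set (Proc Chan)} : QTrans E (T.loop hp hq hpq) r C ↔ QTrans E T r C := by
  rw [qTrans_iff_reachesRegularly, qTrans_iff_reachesRegularly, ← classOf_eq_of_rel hE hET]
  exact reachesRegularly_loop_iff hE hET hclass (not_hasWeightedStep_loop hET (hE.refl _) hr)

end Reach

end Loop

/-! ### Bisimulations generated by a relation -/

lemma iff_of_eqvGen {α : Type*} {r : α → α → Prop} {P : α → Prop}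
    (hr : ∀ x y, r x y → (P x ↔ P y)) {x y : α} (h : Relation.EqvGen r x y) : P x ↔ P y :=
  (Equivalence.eqvGen_iff (r := fun x y => P x ↔ P y) ⟨fun _ => .rfl, .symm, .trans⟩).1 (h.mono hr)

lemma isCBB_eqvGen {r : Proc Chan → Proc Chan → Prop}
    (hL : ∀ A B, r A B → ∀ l C, l.IsAct →
      (LTrans (Relation.EqvGen r) A l C ↔ LTrans (Relation.EqvGen r) B l C))
    (hQ : ∀ A B, r A B → ∀ q C, 0 < q →
      (QTrans (Relation.EqvGen r) A q C ↔ QTrans (Relation.EqvGen r) B q C))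
    (hdiv : ∀ A B, r A B →
      ((∃ t, IsETree (Relation.EqvGen r) A t ∧ t.Divergent) ↔
        ∃ t, IsETree (Relation.EqvGen r) B t ∧ t.Divergent)) :
    IsCBB (Relation.EqvGen r) :=
  ⟨⟨Relation.EqvGen.is_equivalence r,
    fun _ _ l C hl _ hAB _ =>
      (iff_of_eqvGen (fun A B h => hL A B h l C hl) hAB).1,
    fun _ _ q C hq _ _ hAB _ =>
      (iff_of_eqvGen (fun A B h => hQ A B h q C hq) hAB).1⟩,
    fun _ _ => iff_of_eqvGen hdiv⟩

theorem omegaHalf_eq_aNil_general {p q : ℝ} (hp : 0 < p) (hq : 0 < q) (hpq : p + q = 1)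
    (T : Proc Chan) :
    IsCBB (Relation.EqvGen fun x y : Proc Chan => x = T.loop hp hq hpq ∧ y = T) ∧
    RccsEq (T.loop hp hq hpq) T := by
  set E := Relation.EqvGen fun x y : Proc Chan => x = T.loop hp hq hpq ∧ y = T
  have hE : Equivalence E := Relation.EqvGen.is_equivalence _
  have hET : E (T.loop hp hq hpq) T := .rel _ _ ⟨rfl, rfl⟩
  have hclass : classOf E (T.loop hp hq hpq) ⊆ {T.loop hp hq hpq, T} := fun L hL =>
    (iff_of_eqvGen (P := (· ∈ ({T.loop hp hq hpq, T} : Set (Proc Chan))))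
      (by simp +contextual) hL).1 (.inl rfl)
  have hCBB : IsCBB E := by
    apply isCBB_eqvGen
    · rintro _ _ ⟨rfl, rfl⟩ l C hl
      exact lTrans_loop_iff hE hET hclass hl
    · rintro _ _ ⟨rfl, rfl⟩ r C hr
      exact qTrans_loop_iff hE hET hclass hr
    · rintro _ _ ⟨rfl, rfl⟩
      exact exists_divergent_isETree_loop_iff hE hET
  exact ⟨hCBB, E, hCBB, hET⟩

/-- The equivalence closure of the single pair
`{(Ω_{½a}, a.0)}` is a codivergent branching bisimulation on `P_RCCS`; in
particular `Ω_{½a} =_RCCS a.0`. -/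
theorem omegaHalf_eq_aNil {Chan : Type} (a : Chan) :
    IsCBB (Relation.EqvGen fun x y : Proc Chan => x = omegaHalfP a ∧ y = aNilP a) ∧
    RccsEq (omegaHalfP a) (aNilP a) := by
  exact omegaHalf_eq_aNil_general one_half_pos one_half_pos (add_halves 1) (aNilP a)
end
end

section
/- Let a be a channel, let Ω_a = μX.(τ.a.0 + τ.X), where τ.T + τ.T' abbreviates (c)(c̄.0 | (c.T + c.T')) for a fresh channel c, and let Ω_{½a} = μX.(½τ.a.0 ⊕ ½τ.X). Then no codivergent branching bisimulation on P_RCCS relates Ω_a and Ω_{½a}; in particular Ω_a ≠_RCCS Ω_{½a}. -/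
/-!
Formalization of RCCS (Randomized CCS) following the paper
"A Uniform Framework for Probabilistic Process Models".
Channels form a type `Chan`; terms use de Bruijn indices for process variables.
-/

noncomputable section
open scoped Classical

variable {Chan : Type}

/-- `τ.T + τ.T'`, the abbreviation `(c)(c̄.0 | (c.T + c.T'))` for a fresh `c`. -/
def tauPlusTau (c : Chan) (T T' : Tm Chan) : Tm Chan :=
  .loc c (.par (coNil c) (sum2 (Sum.inl c) (Sum.inl c) T T'))

/-- `Ω_a = μX.(τ.a.0 + τ.X)`. -/
def omegaATm (a c : Chan) : Tm Chan := .fix (tauPlusTau c (aNil a) (.var 0))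

lemma omegaATm_spec (a c : Chan) : (omegaATm a c).ClosedAt 0 ∧ (omegaATm a c).WF := by
  refine ⟨?_, ?_⟩ <;>
    simp [omegaATm, tauPlusTau, sum2, coNil, aNil, pfx, Tm.nil, Tm.ClosedAt, Tm.WF, Tm.Guarded,
      Fin.forall_fin_two]

def omegaAP (a c : Chan) : Proc Chan := ⟨omegaATm a c, omegaATm_spec a c⟩

/-!
Suppose a codivergent branching bisimulation relates `Ω_a` to `Ω_{½a}`. The process `Ω_a` runs along
an infinite path of plain `τ`-transitions, by repeatedly choosing the recursive branch, while no
silent descendant of `Ω_{½a}` has a plain `τ`-transition. A `τ`-transition leaving the class would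
have to be matched by `Ω_{½a}`, so the whole path stays in one class and is a divergent ε-tree. By
codivergence `Ω_{½a}` has a divergent ε-tree too. But a silent tree diverges only if it has no leaf,
whereas an ε-tree of `Ω_{½a}` that is not a single leaf has the leaf `a.0` below its root.
-/

lemma Tm.inst_eq_self_of_closedAt {k : ℕ} {S T : Tm Chan} (hT : T.ClosedAt k) :
    Tm.inst k S T = T := by
  induction T generalizing k S with
  | var n => exact if_pos hT
  | sum n α T ih => exact congrArg (Tm.sum n α) (funext fun i => ih i (hT i))
  | rand n p T ih => exact congrArg (Tm.rand n p) (funext fun i => ih i (hT i))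
  | par S T ihS ihT => exact congrArg₂ Tm.par (ihS hT.1) (ihT hT.2)
  | loc a T ih => exact congrArg (Tm.loc a) (ih hT)
  | fix T ih => exact congrArg Tm.fix (ih hT)

/-- A silent transition `S →^{pτ} T` of some probability `p`. -/
def SilentStep (S T : Tm Chan) : Prop := ∃ p, Step S (.tau p) T

namespace PTree

variable {t : PTree Chan} {σ : List ℕ}

lemma hasNode_iff_exists_s13 : t.hasNode σ ↔ ∃ A p, t.node σ = some (A, p) := by
  simp only [hasNode, Option.isSome_iff_exists, Prod.exists]

lemma finBranchProb_of_forall_not_isLeaf (h : ∀ σ, ¬ t.IsLeaf σ) :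
    t.finBranchProb = fun _ => 0 := by
  funext k
  simp only [finBranchProb, h, false_and, if_false, tsum_zero]

lemma Regular.exists_isLeaf_s13 (ht : t.Regular) : ∃ σ, t.IsLeaf σ := by
  by_contra! hleaf
  rw [Regular, finBranchProb_of_forall_not_isLeaf hleaf] at ht
  exact one_ne_zero (tendsto_nhds_unique ht tendsto_const_nhds)

/-- The tree consisting of a root labeled `A` only. -/
def single (A : Proc Chan) : PTree Chan := ⟨fun σ => if σ = [] then some (A, 1) else none⟩

lemma hasNode_single_iff {A : Proc Chan} : (single A).hasNode σ ↔ σ = [] := by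
  simp [single, hasNode]

lemma node_single_eq_some_iff {A B : Proc Chan} {p : ℝ} :
    (single A).node σ = some (B, p) ↔ σ = [] ∧ A = B ∧ 1 = p := by
  simp [single]

lemma regular_single (A : Proc Chan) : (single A).Regular := by
  have hleaf (σ : List ℕ) : (single A).IsLeaf σ ↔ σ = [] := by
    simp [IsLeaf, hasNode_single_iff]
  have hprob : (single A).finBranchProb = fun _ => 1 := by
    funext k
    rw [finBranchProb, tsum_eq_single [] fun σ hσ => if_neg fun h => hσ ((hleaf σ).1 h.1),
      if_pos ⟨(hleaf []).2 rfl, k.zero_le⟩, pathProb]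
  rw [Regular, hprob]
  exact tendsto_const_nhds

/-- The non-branching infinite tree whose node at depth `n` is labeled `P n` and whose edges all
have probability `1`. Its nodes sit at the addresses `[0, …, 0]`. -/
def path (P : ℕ → Proc Chan) : PTree Chan :=
  ⟨fun σ => if ∀ i ∈ σ, i = 0 then some (P σ.length, 1) else none⟩

variable {P : ℕ → Proc Chan}

lemma hasNode_path_iff : (path P).hasNode σ ↔ ∀ i ∈ σ, i = 0 := by
  simp [path, hasNode]

lemma hasNode_path_cons_iff {i : ℕ} :
    (path P).hasNode (i :: σ) ↔ i = 0 ∧ (path P).hasNode σ := by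
  simp only [hasNode_path_iff, List.forall_mem_cons]

lemma node_path_eq_some_iff {B : Proc Chan} {p : ℝ} :
    (path P).node σ = some (B, p) ↔ (path P).hasNode σ ∧ P σ.length = B ∧ 1 = p := by
  rw [hasNode_path_iff]
  simp [path]

lemma not_isLeaf_path : ¬ (path P).IsLeaf σ :=
  fun h => h.2 (hasNode_path_cons_iff.2 ⟨rfl, h.1⟩)

end PTree

namespace IsSilentTree

variable {A B : Proc Chan} {t : PTree Chan} {σ : List ℕ} {p : ℝ}

lemma exists_parent (ht : IsSilentTree A t) {i : ℕ} (h : t.node (i :: σ) = some (B, p)) :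
    ∃ D q, t.node σ = some (D, q) ∧ 0 < p ∧ p ≤ 1 ∧ Step D.val (.tau p) B.val := by
  obtain ⟨-, hprefix, -, -, hedge⟩ := ht
  obtain ⟨D, q, hD⟩ := PTree.hasNode_iff_exists_s13.1
    (hprefix i σ (PTree.hasNode_iff_exists_s13.2 ⟨B, p, h⟩))
  exact ⟨D, q, hD, hedge σ i D q B p hD h⟩

lemma reachable (ht : IsSilentTree A t) (h : t.node σ = some (B, p)) :
    Relation.ReflTransGen SilentStep A.val B.val := by
  induction σ generalizing B p with
  | nil =>
    obtain ⟨rfl, -⟩ : A = B ∧ 1 = p := by simpa [ht.1] using h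
    exact .refl
  | cons i σ ih =>
    obtain ⟨D, q, hD, -, -, hstep⟩ := ht.exists_parent h
    exact (ih hD).tail ⟨p, hstep⟩

lemma isLeaf_of_forall_not_silentStep (ht : IsSilentTree A t) (h : t.node σ = some (B, p))
    (hB : ∀ T, ¬ SilentStep B.val T) : t.IsLeaf σ := by
  refine ⟨PTree.hasNode_iff_exists_s13.2 ⟨B, p, h⟩, fun hchild => ?_⟩
  obtain ⟨D, q, hD⟩ := PTree.hasNode_iff_exists_s13.1 hchild
  obtain ⟨B', p', hB', -, -, hstep⟩ := ht.exists_parent hD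
  obtain ⟨rfl, -⟩ : B = B' ∧ p = p' := by simpa [h] using hB'
  exact hB _ ⟨q, hstep⟩

lemma pathProb_pos_s13 (ht : IsSilentTree A t) (h : t.hasNode σ) : 0 < t.pathProb σ := by
  induction σ with
  | nil => exact one_pos
  | cons i σ ih =>
    obtain ⟨B, p, hB⟩ := PTree.hasNode_iff_exists_s13.1 h
    obtain ⟨D, q, hD, hp, -⟩ := ht.exists_parent hB
    have hedge : t.edgeProb (i :: σ) = p := by simp [PTree.edgeProb, hB]
    rw [PTree.pathProb, hedge]
    exact mul_pos hp (ih (PTree.hasNode_iff_exists_s13.2 ⟨D, q, hD⟩))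

lemma finite_setOf_hasNode_length_le_s13 (ht : IsSilentTree A t) (k : ℕ) :
    {σ | t.hasNode σ ∧ σ.length ≤ k}.Finite := by
  induction k with
  | zero =>
    exact (Set.finite_singleton []).subset fun σ hσ => List.eq_nil_of_length_eq_zero
      (Nat.le_zero.1 hσ.2)
  | succ k ih =>
    obtain ⟨-, hprefix, -, hfin, -⟩ := ht
    choose bound hbound using hfin
    refine ((ih.biUnion fun σ _ => (Set.finite_Iio (bound σ)).image (· :: σ)).insert []).subset ?_
    rintro (_ | ⟨i, σ⟩) ⟨hnode, hlength⟩
    · exact Set.mem_insert _ _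
    · refine Set.mem_insert_of_mem _ (Set.mem_biUnion
        ⟨hprefix i σ hnode, Nat.le_of_succ_le_succ hlength⟩ (Set.mem_image_of_mem _ ?_))
      exact lt_of_not_ge fun hi => hbound σ i hi hnode

lemma pathProb_le_finBranchProb_s13 (ht : IsSilentTree A t) (hσ : t.IsLeaf σ) {k : ℕ}
    (hk : σ.length ≤ k) : t.pathProb σ ≤ t.finBranchProb k := by
  have hsummable : Summable fun τ : List ℕ =>
      if t.IsLeaf τ ∧ τ.length ≤ k then t.pathProb τ else 0 := by
    refine summable_of_hasFiniteSupport ((ht.finite_setOf_hasNode_length_le_s13 k).subset ?_)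
    intro τ hτ
    obtain ⟨hleaf, hlength⟩ := (ite_ne_right_iff.1 hτ).1
    exact ⟨hleaf.1, hlength⟩
  have hnonneg (τ : List ℕ) : 0 ≤ if t.IsLeaf τ ∧ τ.length ≤ k then t.pathProb τ else 0 := by
    split_ifs with h
    exacts [(ht.pathProb_pos_s13 h.1.1).le, le_rfl]
  simpa only [PTree.finBranchProb, if_pos (And.intro hσ hk)] using
    hsummable.le_tsum σ fun τ _ => hnonneg τ

lemma divergent_iff_forall_not_isLeaf (ht : IsSilentTree A t) :
    t.Divergent ↔ ∀ σ, ¬ t.IsLeaf σ := by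
  refine ⟨fun hdiv σ hσ => (ht.pathProb_pos_s13 hσ.1).not_ge (ge_of_tendsto hdiv ?_), fun h => ?_⟩
  · filter_upwards [Filter.eventually_ge_atTop σ.length] with k hk
    exact ht.pathProb_le_finBranchProb_s13 hσ hk
  · rw [PTree.Divergent, PTree.finBranchProb_of_forall_not_isLeaf h]
    exact tendsto_const_nhds

end IsSilentTree

section Bisimulation

variable {E : Proc Chan → Proc Chan → Prop} {A B : Proc Chan}

lemma isETree_single (hA : E A A) : IsETree E A (PTree.single A) := by
  have hlabel (σ : List ℕ) (B : Proc Chan) (p : ℝ)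
      (hB : (PTree.single A).node σ = some (B, p)) : E A B := by
    obtain ⟨-, rfl, -⟩ := PTree.node_single_eq_some_iff.1 hB
    exact hA
  refine ⟨⟨PTree.node_single_eq_some_iff.2 ⟨rfl, rfl, rfl⟩, ?_, ?_, ?_, ?_⟩, hlabel, ?_, ?_⟩ <;>
    simp [PTree.hasNode_single_iff, PTree.node_single_eq_some_iff]

lemma isETree_path {P : ℕ → Proc Chan} (hE : ∀ n, E (P 0) (P n))
    (hP : ∀ n, Step (P n).val (.tau 1) (P (n + 1)).val) :
    IsETree E (P 0) (PTree.path P) := by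
  have hedge : ∀ σ i B p B' p', (PTree.path P).node σ = some (B, p) →
      (PTree.path P).node (i :: σ) = some (B', p') →
      i = 0 ∧ p' = 1 ∧ Step B.val (.tau 1) B'.val := by
    intro σ i B p B' p' hB hB'
    obtain ⟨-, rfl, -⟩ := PTree.node_path_eq_some_iff.1 hB
    obtain ⟨hi, rfl, rfl⟩ := PTree.node_path_eq_some_iff.1 hB'
    exact ⟨(PTree.hasNode_path_cons_iff.1 hi).1, rfl, hP σ.length⟩
  refine ⟨⟨by simp [PTree.path], ?_, ?_, ?_, ?_⟩, ?_, ?_, ?_⟩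
  · exact fun i σ h => (PTree.hasNode_path_cons_iff.1 h).2
  · intro i j σ hji h
    obtain ⟨rfl, hσ⟩ := PTree.hasNode_path_cons_iff.1 h
    exact PTree.hasNode_path_cons_iff.2 ⟨Nat.le_zero.1 hji, hσ⟩
  · exact fun σ => ⟨1, fun i hi h => Nat.one_le_iff_ne_zero.1 hi
      (PTree.hasNode_path_cons_iff.1 h).1⟩
  · intro σ i B p B' p' hB hB'
    obtain ⟨-, rfl, hstep⟩ := hedge σ i B p B' p' hB hB'
    exact ⟨one_pos, le_rfl, hstep⟩
  · intro σ B p hB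
    obtain ⟨-, rfl, -⟩ := PTree.node_path_eq_some_iff.1 hB
    exact hE σ.length
  · intro σ i B p B' q hB hB' hq
    exact absurd (hedge σ i B p B' q hB hB').2.1 hq.ne
  · intro σ i B p B' hB hB'
    obtain ⟨hi, -, hstep⟩ := hedge σ i B p B' 1 hB hB'
    exact ⟨hstep, hi, fun h => one_ne_zero (PTree.hasNode_path_cons_iff.1 h).1⟩

lemma LTrans.of_step {l : Lab Chan} {C : Set (Proc Chan)} (hA : E A A) (hB : B ∈ C)
    (hstep : Step A.val l B.val) : LTrans E A l C := by
  refine ⟨PTree.single A, isETree_single hA, PTree.regular_single A, fun σ L p hL _ => ?_⟩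
  obtain ⟨-, rfl, -⟩ := PTree.node_single_eq_some_iff.1 hL
  exact ⟨B, hB, hstep⟩

lemma LTrans.exists_reachable_step {l : Lab Chan} {C : Set (Proc Chan)} (h : LTrans E A l C) :
    ∃ S T, Relation.ReflTransGen SilentStep A.val S ∧ Step S l T := by
  obtain ⟨t, ht, hregular, hleaves⟩ := h
  obtain ⟨σ, hnode, hleaf⟩ := hregular.exists_isLeaf_s13
  obtain ⟨L, p, hL⟩ := PTree.hasNode_iff_exists_s13.1 hnode
  obtain ⟨L', -, hstep⟩ := hleaves σ L p hL hleaf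
  exact ⟨L.val, L'.val, ht.1.reachable hL, hstep⟩

lemma IsETree.exists_isLeaf_s13 {t : PTree Chan} (ht : IsETree E A t)
    (hτ : ∀ T, ¬ Step A.val (.tau 1) T)
    (hrand : ∀ n ps Ts, CStep A.val n ps Ts → ∃ i, ∀ T, ¬ SilentStep (Ts i) T) :
    ∃ σ, t.IsLeaf σ := by
  have hsilent := ht.1
  obtain ⟨⟨hroot, -, -, -, hedge⟩, -, hcoll, -⟩ := ht
  by_cases hchild : t.hasNode [0]
  · obtain ⟨B, p, hB⟩ := PTree.hasNode_iff_exists_s13.1 hchild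
    obtain ⟨-, hp, hstep⟩ := hedge [] 0 A 1 B p hroot hB
    have hp_lt : p < 1 := hp.lt_of_ne fun h => hτ B.val (h ▸ hstep)
    obtain ⟨n, ps, Ts, hc, -, hchildren⟩ := hcoll [] 0 A 1 B p hroot hB hp_lt
    obtain ⟨i, hstuck⟩ := hrand n ps Ts hc
    obtain ⟨D, hD, hnode⟩ := hchildren i
    exact ⟨[(i : ℕ)], hsilent.isLeaf_of_forall_not_silentStep hnode (hD ▸ hstuck)⟩
  · exact ⟨[], PTree.hasNode_iff_exists_s13.2 ⟨A, 1, hroot⟩, hchild⟩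

lemma IsBB.rel_of_step_tau {A' : Proc Chan} (hE : IsBB E) (hAB : E A B)
    (hB : ∀ S T, Relation.ReflTransGen SilentStep B.val S → ¬ Step S (.tau 1) T)
    (hstep : Step A.val (.tau 1) A'.val) : E A A' := by
  obtain ⟨hequiv, hact, -⟩ := hE
  by_contra hAA'
  have hclass : classOf E A' ≠ classOf E A := fun h =>
    hAA' (h ▸ hequiv.refl A' : A' ∈ classOf E A)
  obtain ⟨S, T, hS, hST⟩ := (hact A B (.tau 1) (classOf E A') rfl ⟨A', rfl⟩ hAB (.inr hclass)
    (.of_step (hequiv.refl A) (hequiv.refl A') hstep)).exists_reachable_step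
  exact hB S T hS hST

lemma IsCBB.exists_divergent_of_tau_path {P : ℕ → Proc Chan} (hE : IsCBB E)
    (hP : ∀ n, Step (P n).val (.tau 1) (P (n + 1)).val) (hPB : E (P 0) B)
    (hB : ∀ S T, Relation.ReflTransGen SilentStep B.val S → ¬ Step S (.tau 1) T) :
    ∃ t, IsETree E B t ∧ t.Divergent := by
  obtain ⟨hbb, hcodiv⟩ := hE
  have hequiv := hbb.1
  have hclass (n : ℕ) : E (P 0) (P n) := by
    induction n with
    | zero => exact hequiv.refl _
    | succ n ih =>
      exact hequiv.trans ih (hbb.rel_of_step_tau (hequiv.trans (hequiv.symm ih) hPB) hB (hP n))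
  have hpath := isETree_path hclass hP
  exact (hcodiv _ _ hPB).1 ⟨PTree.path P, hpath,
    hpath.1.divergent_iff_forall_not_isLeaf.2 fun _ => PTree.not_isLeaf_path⟩

end Bisimulation

section Transitions

variable {n : ℕ} {l : Lab Chan} {T U : Tm Chan}

lemma step_sum_iff {α : Fin n → Chan ⊕ Chan} {Ts : Fin n → Tm Chan} :
    Step (.sum n α Ts) l U ↔ ∃ i, l = guardLab (α i) ∧ U = Ts i := by
  constructor
  · intro h
    cases h with
    | sum i => exact ⟨i, rfl, rfl⟩
  · rintro ⟨i, rfl, rfl⟩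
    exact .sum i

lemma step_rand_iff {p : Fin n → ℝ} {Ts : Fin n → Tm Chan} :
    Step (.rand n p Ts) l U ↔ ∃ i, l = .tau (p i) ∧ U = Ts i := by
  constructor
  · intro h
    cases h with
    | rand i => exact ⟨i, rfl, rfl⟩
  · rintro ⟨i, rfl, rfl⟩
    exact .rand i

lemma step_fix_iff : Step (.fix T) l U ↔ Step (Tm.inst 0 (.fix T) T) l U :=
  ⟨fun h => by cases h with | fix h => exact h, .fix⟩

lemma cStep_fix_iff {p : Fin n → ℝ} {Us : Fin n → Tm Chan} :
    CStep (.fix T) n p Us ↔ CStep (Tm.inst 0 (.fix T) T) n p Us :=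
  ⟨fun h => by cases h with | fix h => exact h, .fix⟩

lemma CStep.exists_eq_of_rand {m : ℕ} {p : Fin n → ℝ} {Ts : Fin n → Tm Chan} {q : Fin m → ℝ}
    {Us : Fin m → Tm Chan} (h : CStep (.rand n p Ts) m q Us) (i : Fin n) :
    ∃ j, Us j = Ts i := by
  cases h with
  | rand => exact ⟨i, rfl⟩

lemma Tm.inst_rand2 (k : ℕ) (S : Tm Chan) (p q : ℝ) :
    Tm.inst k S (rand2 p q T U) = rand2 p q (Tm.inst k S T) (Tm.inst k S U) := by
  simp only [rand2, Tm.inst]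
  congr 1
  funext i
  fin_cases i <;> rfl

lemma Tm.inst_tauPlusTau (k : ℕ) (S : Tm Chan) (c : Chan) :
    Tm.inst k S (tauPlusTau c T U) = tauPlusTau c (Tm.inst k S T) (Tm.inst k S U) := by
  have hcoNil : Tm.inst k S (coNil c) = coNil c := Tm.inst_eq_self_of_closedAt
    (by simp [coNil, pfx, Tm.nil, Tm.ClosedAt])
  simp only [tauPlusTau, sum2, Tm.inst, hcoNil]
  congr 3
  funext i
  fin_cases i <;> rfl

lemma not_silentStep_aNil (a : Chan) : ¬ SilentStep (aNil a) T := by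
  rintro ⟨p, h⟩
  obtain ⟨-, hlab, -⟩ := step_sum_iff.1 h
  cases hlab

end Transitions

section OmegaHalf

variable (a : Chan)

lemma inst_omegaHalfTm_body :
    Tm.inst 0 (omegaHalfTm a) (rand2 (1 / 2) (1 / 2) (aNil a) (.var 0)) =
      rand2 (1 / 2) (1 / 2) (aNil a) (omegaHalfTm a) := by
  rw [Tm.inst_rand2, Tm.inst_eq_self_of_closedAt (aNil_spec a).1]
  rfl

variable {a}

lemma step_omegaHalfTm_iff {l : Lab Chan} {T : Tm Chan} :
    Step (omegaHalfTm a) l T ↔ l = .tau (1 / 2) ∧ (T = aNil a ∨ T = omegaHalfTm a) := by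
  rw [omegaHalfTm, step_fix_iff, ← omegaHalfTm, inst_omegaHalfTm_body, rand2, step_rand_iff]
  simp [Fin.exists_fin_two, and_or_left]

lemma CStep.exists_eq_aNil_of_omegaHalfTm {n : ℕ} {p : Fin n → ℝ} {Ts : Fin n → Tm Chan}
    (h : CStep (omegaHalfTm a) n p Ts) : ∃ i, Ts i = aNil a := by
  rw [omegaHalfTm, cStep_fix_iff, ← omegaHalfTm, inst_omegaHalfTm_body] at h
  exact h.exists_eq_of_rand 0

lemma eq_of_reachable_omegaHalfTm {S : Tm Chan}
    (h : Relation.ReflTransGen SilentStep (omegaHalfTm a) S) :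
    S = aNil a ∨ S = omegaHalfTm a := by
  induction h with
  | refl => exact .inr rfl
  | tail _ hstep ih =>
    rcases ih with rfl | rfl
    · exact absurd hstep (not_silentStep_aNil a)
    · obtain ⟨p, hp⟩ := hstep
      exact (step_omegaHalfTm_iff.1 hp).2

lemma not_step_omegaHalfTm_tau_one {T : Tm Chan} : ¬ Step (omegaHalfTm a) (.tau 1) T := by
  intro h
  have hp : (1 : ℝ) = 1 / 2 := Lab.tau.inj (step_omegaHalfTm_iff.1 h).1
  norm_num at hp

lemma not_step_tau_one_of_reachable_omegaHalfTm {S T : Tm Chan}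
    (h : Relation.ReflTransGen SilentStep (omegaHalfTm a) S) : ¬ Step S (.tau 1) T := by
  rcases eq_of_reachable_omegaHalfTm h with rfl | rfl
  · exact fun hstep => not_silentStep_aNil a ⟨1, hstep⟩
  · exact not_step_omegaHalfTm_tau_one

lemma not_divergent_of_isETree_omegaHalfP {E : Proc Chan → Proc Chan → Prop} {t : PTree Chan}
    (ht : IsETree E (omegaHalfP a) t) : ¬ t.Divergent := by
  rw [ht.1.divergent_iff_forall_not_isLeaf, not_forall_not]
  refine ht.exists_isLeaf_s13 (fun _ => not_step_omegaHalfTm_tau_one) fun n p Ts hc => ?_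
  obtain ⟨i, hi⟩ := CStep.exists_eq_aNil_of_omegaHalfTm hc
  exact ⟨i, fun _ => hi ▸ not_silentStep_aNil a⟩

end OmegaHalf

section OmegaA

/-- The term `(c)(0 | T)`, which is what remains of `τ.S + τ.T` once its second branch has been
chosen: the localization and the spent half of the synchronization stay in place. -/
def remnant (c : Chan) (T : Proc Chan) : Proc Chan :=
  ⟨.loc c (.par Tm.nil T.val), ⟨fun i => i.elim0, T.2.1⟩, fun i => i.elim0, T.2.2⟩

lemma Step.remnant {S T : Proc Chan} {p : ℝ} (c : Chan) (h : Step S.val (.tau p) T.val) :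
    Step (remnant c S).val (.tau p) (remnant c T).val :=
  .loc c (.parR h) nofun nofun

lemma step_tauPlusTau_remnant (c : Chan) (S : Tm Chan) (T : Proc Chan) :
    Step (tauPlusTau c S T.val) (.tau 1) (remnant c T).val :=
  .loc c (.comR (step_sum_iff.2 ⟨0, rfl, rfl⟩) (step_sum_iff.2 ⟨1, rfl, rfl⟩))
    nofun nofun

lemma step_omegaAP_remnant (a c : Chan) :
    Step (omegaAP a c).val (.tau 1) (remnant c (omegaAP a c)).val := by
  refine step_fix_iff.2 ?_
  rw [Tm.inst_tauPlusTau, Tm.inst_eq_self_of_closedAt (aNil_spec a).1]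
  exact step_tauPlusTau_remnant c (aNil a) (omegaAP a c)

lemma step_iterate_remnant_omegaAP (a c : Chan) (n : ℕ) :
    Step ((remnant c)^[n] (omegaAP a c)).val (.tau 1)
      ((remnant c)^[n + 1] (omegaAP a c)).val := by
  induction n with
  | zero => exact step_omegaAP_remnant a c
  | succ n ih =>
    simp only [Function.iterate_succ_apply'] at ih ⊢
    exact ih.remnant c

end OmegaA

/-- For a fresh channel `c ≠ a`, no codivergent branching
bisimulation on `P_RCCS` relates `Ω_a = μX.(τ.a.0 + τ.X)` and
`Ω_{½a} = μX.(½τ.a.0 ⊕ ½τ.X)`; in particular `Ω_a ≠_RCCS Ω_{½a}`. -/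
theorem omegaA_ne_omegaHalf {Chan : Type} (a c : Chan) (hfresh : c ≠ a) :
    (∀ E : Proc Chan → Proc Chan → Prop, IsCBB E → ¬ E (omegaAP a c) (omegaHalfP a)) ∧
    ¬ RccsEq (omegaAP a c) (omegaHalfP a) := by
  have hnot : ∀ E : Proc Chan → Proc Chan → Prop, IsCBB E →
      ¬ E (omegaAP a c) (omegaHalfP a) := by
    intro E hE hrel
    obtain ⟨t, ht, hdiv⟩ := hE.exists_divergent_of_tau_path (step_iterate_remnant_omegaAP a c)
      hrel fun _ _ => not_step_tau_one_of_reachable_omegaHalfTm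
    exact not_divergent_of_isETree_omegaHalfP ht hdiv
  exact ⟨hnot, fun ⟨E, hE, hrel⟩ => hnot E hE hrel⟩
end
end
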